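/- arXiv:0807.2927 — 11 statements merged into one kernel-verified Lean document; each statement's English description precedes it below -/
import Mathlib

section
/- In a †-category enriched in commutative monoids, †-limits are unique up to unique unitary isomorphism. Precisely: let F : J ⥤ C be a functor, let S be a finite set of objects of J, and let (L, l) and (M, m) be two limit cones over F such that ∑_{s ∈ S} l_s ≫ (l_s)† = 𝟙 L and ∑_{s ∈ S} m_s ≫ (m_s)† = 𝟙 M. Then the unique isomorphism c : L ⟶ M satisfying c ≫ m_s = l_s for all objects s of J is unitary, i.e. c ≫ c† = 𝟙 L and c† ≫ c = 𝟙 M. -/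
/-!
Inserting `𝟙 M = ∑ m_s ≫ m_s†` between `c` and `c†` gives
`c ≫ c† = ∑ (c ≫ m_s) ≫ (c ≫ m_s)† = ∑ l_s ≫ l_s† = 𝟙 L`, so `c†` is a right inverse of `c`.
As the comparison map of two limit cones, `c` also has a two-sided inverse, which therefore
coincides with `c†`.
-/

open CategoryTheory CategoryTheory.Limits CategoryTheory.MonoidalCategory

universe v u

/-- A †-category structure: a contravariant, identity-on-objects, involutive
assignment of morphisms. -/
structure DaggerData (C : Type u) [Category.{v} C] where
  dag : ∀ {A B : C}, (A ⟶ B) → (B ⟶ A)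
  dag_id : ∀ A : C, dag (𝟙 A) = 𝟙 A
  dag_comp : ∀ {A B E : C} (f : A ⟶ B) (g : B ⟶ E), dag (f ≫ g) = dag g ≫ dag f
  dag_dag : ∀ {A B : C} (f : A ⟶ B), dag (dag f) = f

/-- Enrichment in commutative monoids: composition is bilinear and
zero morphisms are absorbing. -/
structure CMonEnriched (C : Type u) [Category.{v} C]
    [∀ X Y : C, AddCommMonoid (X ⟶ Y)] : Prop where
  comp_add : ∀ {X Y Z : C} (f : X ⟶ Y) (g h : Y ⟶ Z), f ≫ (g + h) = f ≫ g + f ≫ h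
  add_comp : ∀ {X Y Z : C} (f g : X ⟶ Y) (h : Y ⟶ Z), (f + g) ≫ h = f ≫ h + g ≫ h
  comp_zero : ∀ {X Y Z : C} (f : X ⟶ Y), f ≫ (0 : Y ⟶ Z) = 0
  zero_comp : ∀ {X Y Z : C} (f : Y ⟶ Z), (0 : X ⟶ Y) ≫ f = 0

/-- Two-sided composition `f ↦ c ≫ f ≫ d` distributes over finite sums. -/
theorem comp_sum_comp {C : Type u} [Category.{v} C] [∀ X Y : C, AddCommMonoid (X ⟶ Y)]
    (En : CMonEnriched C) {ι : Type*} (S : Finset ι) {W X Y Z : C}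
    (c : W ⟶ X) (f : ι → (X ⟶ Y)) (d : Y ⟶ Z) :
    c ≫ (∑ s ∈ S, f s) ≫ d = ∑ s ∈ S, c ≫ f s ≫ d :=
  map_sum (⟨⟨fun f => c ≫ f ≫ d, by simp [En.zero_comp, En.comp_zero]⟩,
    fun f g => by simp [En.add_comp, En.comp_add]⟩ : (X ⟶ Y) →+ (W ⟶ Z)) f S

/-- In a †-category enriched in commutative monoids, †-limits are unique up to
unique unitary isomorphism: any comparison morphism between two normalized limit
cones is unitary. -/
theorem stmt0 {J : Type*} [Category J] {C : Type u} [Category.{v} C]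
    [∀ X Y : C, AddCommMonoid (X ⟶ Y)]
    (D : DaggerData C) (En : CMonEnriched C)
    (F : J ⥤ C) (S : Finset J)
    (L M : Cone F) (hL : IsLimit L) (hM : IsLimit M)
    (hLnorm : ∑ s ∈ S, L.π.app s ≫ D.dag (L.π.app s) = 𝟙 L.pt)
    (hMnorm : ∑ s ∈ S, M.π.app s ≫ D.dag (M.π.app s) = 𝟙 M.pt)
    (c : L.pt ⟶ M.pt) (hc : ∀ j : J, c ≫ M.π.app j = L.π.app j) :
    c ≫ D.dag c = 𝟙 L.pt ∧ D.dag c ≫ c = 𝟙 M.pt := by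
  have hcc : c ≫ D.dag c = 𝟙 L.pt := by
    calc c ≫ D.dag c = c ≫ (∑ s ∈ S, M.π.app s ≫ D.dag (M.π.app s)) ≫ D.dag c := by
          rw [hMnorm, Category.id_comp]
      _ = ∑ s ∈ S, L.π.app s ≫ D.dag (L.π.app s) := by
          rw [comp_sum_comp En]
          refine Finset.sum_congr rfl fun s _ => ?_
          rw [← hc s, D.dag_comp]
          simp only [Category.assoc]
      _ = 𝟙 L.pt := hLnorm
  have hdc : hL.lift M ≫ c = 𝟙 M.pt := hM.hom_ext fun j => by simp [hc]
  refine ⟨hcc, ?_⟩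
  have hdag : D.dag c = hL.lift M := by
    rw [← Category.id_comp (D.dag c), ← hdc, Category.assoc, hcc, Category.comp_id]
  rw [hdag, hdc]
end

section
/- In a †-category enriched in commutative monoids, a binary †-product is a †-biproduct. Precisely: let (L, l_A : L ⟶ A, l_B : L ⟶ B) be a binary product cone (for every pair x_A : X ⟶ A, x_B : X ⟶ B there is a unique u : X ⟶ L with u ≫ l_A = x_A and u ≫ l_B = x_B) satisfying the normalization condition l_A ≫ (l_A)† + l_B ≫ (l_B)† = 𝟙 L. Then (l_A)† ≫ l_A = 𝟙 A, (l_B)† ≫ l_B = 𝟙 B, (l_A)† ≫ l_B = 0, and (l_B)† ≫ l_A = 0; that is, L is a †-biproduct of A and B with injections (l_A)†, (l_B)† and projections l_A, l_B. -/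
open CategoryTheory CategoryTheory.Limits CategoryTheory.MonoidalCategory

universe v u

/-- In a †-category enriched in commutative monoids, a binary †-product
(a binary product cone satisfying the normalization condition) is a †-biproduct. -/
theorem stmt1 {C : Type u} [Category.{v} C]
    [∀ X Y : C, AddCommMonoid (X ⟶ Y)]
    (D : DaggerData C) (En : CMonEnriched C)
    {A B L : C} (lA : L ⟶ A) (lB : L ⟶ B)
    (hprod : ∀ (X : C) (xA : X ⟶ A) (xB : X ⟶ B),
      ∃! u : X ⟶ L, u ≫ lA = xA ∧ u ≫ lB = xB)
    (hnorm : lA ≫ D.dag lA + lB ≫ D.dag lB = 𝟙 L) :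
    D.dag lA ≫ lA = 𝟙 A ∧ D.dag lB ≫ lB = 𝟙 B ∧
    D.dag lA ≫ lB = 0 ∧ D.dag lB ≫ lA = 0 := by
  -- The injection of `A`, given by the product property, is `lA†`: precompose `hnorm` with it.
  have hA : D.dag lA ≫ lA = 𝟙 A ∧ D.dag lA ≫ lB = 0 := by
    obtain ⟨a, ⟨haA, haB⟩, -⟩ := hprod A (𝟙 A) 0
    have h : a = D.dag lA := by
      rw [← Category.comp_id a, ← hnorm, En.comp_add, ← Category.assoc, ← Category.assoc,
        haA, haB, En.zero_comp, Category.id_comp, add_zero]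
    exact h ▸ ⟨haA, haB⟩
  have hB : D.dag lB ≫ lA = 0 ∧ D.dag lB ≫ lB = 𝟙 B := by
    obtain ⟨b, ⟨hbA, hbB⟩, -⟩ := hprod B 0 (𝟙 B)
    have h : b = D.dag lB := by
      rw [← Category.comp_id b, ← hnorm, En.comp_add, ← Category.assoc, ← Category.assoc,
        hbA, hbB, En.zero_comp, Category.id_comp, zero_add]
    exact h ▸ ⟨hbA, hbB⟩
  exact ⟨hA.1, hB.2, hA.2, hB.1⟩
end

section
/- In a †-category with a zero object in which every morphism admits a †-kernel, the †-functor is nondegenerate: for every morphism f : A ⟶ B, if f ≫ f† = 0 then f = 0. -/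
open CategoryTheory CategoryTheory.Limits CategoryTheory.MonoidalCategory

universe v u

/-- The dagger preserves zero morphisms: `0` factors through the zero object, hence so does
its dagger. -/
lemma DaggerData.dag_zero {C : Type u} [Category.{v} C]
    [HasZeroMorphisms C] [HasZeroObject C] (D : DaggerData C) (A B : C) :
    D.dag (0 : A ⟶ B) = 0 := by
  obtain ⟨Z, hZ⟩ := HasZeroObject.zero (C := C)
  have h : (0 : A ⟶ B) = (0 : A ⟶ Z) ≫ (0 : Z ⟶ B) := by simp
  rw [h, D.dag_comp, hZ.eq_zero_of_tgt (D.dag (0 : Z ⟶ B)), zero_comp]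

/-- In a †-category with a zero object in which every morphism admits a †-kernel,
the †-functor is nondegenerate: `f ≫ f† = 0` implies `f = 0`. -/
theorem stmt4 {C : Type u} [Category.{v} C]
    [HasZeroMorphisms C] [HasZeroObject C]
    (D : DaggerData C)
    (hker : ∀ {A B : C} (g : B ⟶ A), ∃ (K : C) (k : K ⟶ B),
      k ≫ g = 0 ∧ k ≫ D.dag k = 𝟙 K ∧
      ∀ {X : C} (h : X ⟶ B), h ≫ g = 0 → ∃! t : X ⟶ K, t ≫ k = h)
    {A B : C} (f : A ⟶ B) (hf : f ≫ D.dag f = 0) :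
    f = 0 := by
  obtain ⟨K, k, hk, hiso, huniv⟩ := hker (D.dag f)
  obtain ⟨t, rfl, -⟩ := huniv f hf
  -- The dagger of `k ≫ f† = 0` reads `f ≫ k† = 0`; since `k` is an isometry, `f ≫ k† = t`.
  have ht : D.dag (k ≫ D.dag (t ≫ k)) = 0 := by rw [hk, D.dag_zero]
  rw [D.dag_comp, D.dag_dag, Category.assoc, hiso, Category.comp_id] at ht
  rw [ht, zero_comp]
end

section
/- In a †-category enriched in commutative monoids that has a zero object, binary †-biproducts and †-equalizers of all parallel pairs, hom-set addition is cancellable: for all parallel morphisms f, g, h : A ⟶ B, if f + h = g + h then f = g. -/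
/-!
Let `P = A ⊕ A` with injections `i₁, i₂`, and let `e` be the †-equalizer of `[f, h]` and `[g, h]`,
both `P ⟶ B`. Then `p = e† ≫ e` is a self-adjoint endomorphism of `P` fixing every morphism that
equalizes the pair. Both `i₂` and, because `f + h = g + h`, the diagonal `i₁ + i₂` equalize it.
Fixing `i₂` determines the second row of the matrix of `p`, and self-adjointness then gives
`p₁₂ = 0`; fixing the diagonal gives `p₁₁ = 𝟙`. Hence `p` fixes `i₁` as well, so `i₁` equalizes
the pair, which says `f = g`.
-/

open CategoryTheory CategoryTheory.Limits CategoryTheory.MonoidalCategory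

universe v u

/-- Existence of binary †-biproducts. -/
def HasBinaryDagBiproducts {C : Type u} [Category.{v} C]
    [∀ X Y : C, AddCommMonoid (X ⟶ Y)] (D : DaggerData C) : Prop :=
  ∀ A B : C, ∃ (P : C) (iA : A ⟶ P) (iB : B ⟶ P),
    iA ≫ D.dag iA = 𝟙 A ∧ iB ≫ D.dag iB = 𝟙 B ∧
    iA ≫ D.dag iB = 0 ∧ iB ≫ D.dag iA = 0 ∧
    D.dag iA ≫ iA + D.dag iB ≫ iB = 𝟙 P

/-- Existence of †-equalizers of all parallel pairs: equalizers that are isometries. -/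
def HasDagEqualizers {C : Type u} [Category.{v} C] (D : DaggerData C) : Prop :=
  ∀ {X Y : C} (u v : X ⟶ Y), ∃ (E : C) (e : E ⟶ X),
    e ≫ u = e ≫ v ∧ e ≫ D.dag e = 𝟙 E ∧
    ∀ {W : C} (w : W ⟶ X), w ≫ u = w ≫ v → ∃! t : W ⟶ E, t ≫ e = w

/-- In a †-category enriched in commutative monoids with a zero object,
binary †-biproducts and †-equalizers of all parallel pairs, hom-set addition
is cancellable. -/
theorem stmt5 {C : Type u} [Category.{v} C]
    [∀ X Y : C, AddCommMonoid (X ⟶ Y)] [HasZeroObject C]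
    (D : DaggerData C) (En : CMonEnriched C)
    (hbp : HasBinaryDagBiproducts D) (heq : HasDagEqualizers D)
    {A B : C} (f g h : A ⟶ B) (hfgh : f + h = g + h) :
    f = g := by
  obtain ⟨P, i₁, i₂, h11, h22, h12, h21, hsum⟩ := hbp A A
  obtain ⟨E, e, he, he_iso, huniv⟩ :=
    heq (D.dag i₁ ≫ f + D.dag i₂ ≫ h) (D.dag i₁ ≫ g + D.dag i₂ ≫ h)
  have copair₁ : ∀ k : A ⟶ B, i₁ ≫ (D.dag i₁ ≫ k + D.dag i₂ ≫ h) = k := fun k => by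
    rw [En.comp_add, ← Category.assoc, ← Category.assoc, h11, h12, Category.id_comp,
      En.zero_comp, add_zero]
  have copair₂ : ∀ k : A ⟶ B, i₂ ≫ (D.dag i₁ ≫ k + D.dag i₂ ≫ h) = h := fun k => by
    rw [En.comp_add, ← Category.assoc, ← Category.assoc, h22, h21, Category.id_comp,
      En.zero_comp, zero_add]
  obtain ⟨p, hp⟩ : ∃ p, p = D.dag e ≫ e := ⟨_, rfl⟩
  have hp_dag : D.dag p = p := by rw [hp, D.dag_comp, D.dag_dag]
  have e_p : e ≫ p = e := by
    rw [hp, ← Category.assoc, he_iso, Category.id_comp]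
  have p_fix : ∀ w : A ⟶ P, w ≫ (D.dag i₁ ≫ f + D.dag i₂ ≫ h) =
      w ≫ (D.dag i₁ ≫ g + D.dag i₂ ≫ h) → w ≫ p = w := fun w hw => by
    obtain ⟨t, rfl, -⟩ := huniv w hw
    rw [Category.assoc, e_p]
  have i₂_p : i₂ ≫ p = i₂ := p_fix i₂ (by rw [copair₂, copair₂])
  have diag_p : (i₁ + i₂) ≫ p = i₁ + i₂ := p_fix _ (by
    rw [En.add_comp, En.add_comp, copair₁, copair₁, copair₂, copair₂, hfgh])
  -- The off-diagonal entry `p₁₂` is the adjoint of `p₂₁ = i₂ ≫ i₁†`, that is, `i₁ ≫ i₂† = 0`.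
  have p12 : (i₁ ≫ p) ≫ D.dag i₂ = 0 := by
    rw [Category.assoc, ← hp_dag, ← D.dag_comp, i₂_p, h12]
  have p11 : (i₁ ≫ p) ≫ D.dag i₁ = 𝟙 A := by
    have := congrArg (· ≫ D.dag i₁) diag_p
    simpa only [En.add_comp, i₂_p, h21, h11, add_zero] using this
  have i₁_p : i₁ ≫ p = i₁ := by
    rw [← Category.comp_id (i₁ ≫ p), ← hsum, En.comp_add, ← Category.assoc, ← Category.assoc,
      p11, p12, Category.id_comp, En.zero_comp, add_zero]
  calc f = (i₁ ≫ p) ≫ (D.dag i₁ ≫ f + D.dag i₂ ≫ h) := by rw [i₁_p, copair₁]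
    _ = (i₁ ≫ p) ≫ (D.dag i₁ ≫ g + D.dag i₂ ≫ h) := by simp only [hp, Category.assoc, he]
    _ = g := by rw [i₁_p, copair₁]
end

section
/- In a †-category enriched in commutative monoids that has a zero object, finite †-biproducts and †-equalizers of all finite families of parallel morphisms, n-fold sums of morphisms are cancellable: for all parallel morphisms f, g : A ⟶ B and every natural number n ≠ 0, if n • f = n • g (the n-fold sums f + ⋯ + f and g + ⋯ + g) then f = g. -/
/-!
The point is that `n • 𝟙 A` is invertible for `n ≠ 0`. The equalizer of the `n` projections
`Aⁿ ⟶ A` is the diagonal `Δ : A ⟶ Aⁿ`, so a †-equalizer `e : E ⟶ Aⁿ` of them satisfies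
`Δ = t ≫ e` for an isomorphism `t : A ⟶ E`. As `e ≫ e† = 𝟙`, it follows that
`t ≫ t† = Δ ≫ Δ† = n • 𝟙 A`, and `t ≫ t†` is invertible since `t` is. Therefore
`n • f = t ≫ t† ≫ f` determines `f`.
-/

open CategoryTheory CategoryTheory.Limits CategoryTheory.MonoidalCategory

universe v u

/-- Existence of finite †-biproducts. -/
def HasFiniteDagBiproducts {C : Type u} [Category.{v} C]
    [∀ X Y : C, AddCommMonoid (X ⟶ Y)] (D : DaggerData C) : Prop :=
  ∀ (n : ℕ) (A : Fin n → C), ∃ (P : C) (i : ∀ k, A k ⟶ P),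
    (∀ k, i k ≫ D.dag (i k) = 𝟙 (A k)) ∧
    (∀ k j, k ≠ j → i k ≫ D.dag (i j) = 0) ∧
    ∑ k, D.dag (i k) ≫ i k = 𝟙 P

/-- Existence of †-equalizers of all finite families of parallel morphisms. -/
def HasFiniteDagEqualizers {C : Type u} [Category.{v} C] (D : DaggerData C) : Prop :=
  ∀ (n : ℕ) {X Y : C} (u : Fin n → (X ⟶ Y)), ∃ (E : C) (e : E ⟶ X),
    (∀ k j, e ≫ u k = e ≫ u j) ∧ e ≫ D.dag e = 𝟙 E ∧
    ∀ {W : C} (w : W ⟶ X), (∀ k j, w ≫ u k = w ≫ u j) → ∃! t : W ⟶ E, t ≫ e = w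

theorem CMonEnriched.comp_sum {C : Type u} [Category.{v} C]
    [∀ X Y : C, AddCommMonoid (X ⟶ Y)] (En : CMonEnriched C) {ι : Type*} (s : Finset ι)
    {X Y Z : C} (f : X ⟶ Y) (g : ι → (Y ⟶ Z)) :
    f ≫ ∑ k ∈ s, g k = ∑ k ∈ s, f ≫ g k :=
  map_sum ({ toFun := fun h => f ≫ h
             map_zero' := En.comp_zero f
             map_add' := En.comp_add f } : (Y ⟶ Z) →+ (X ⟶ Z)) g s

theorem CMonEnriched.sum_comp {C : Type u} [Category.{v} C]
    [∀ X Y : C, AddCommMonoid (X ⟶ Y)] (En : CMonEnriched C) {ι : Type*} (s : Finset ι)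
    {X Y Z : C} (g : ι → (X ⟶ Y)) (f : Y ⟶ Z) :
    (∑ k ∈ s, g k) ≫ f = ∑ k ∈ s, g k ≫ f :=
  map_sum ({ toFun := fun h => h ≫ f
             map_zero' := En.zero_comp f
             map_add' := fun a b => En.add_comp a b f } : (X ⟶ Y) →+ (X ⟶ Z)) g s

/-- In a †-category enriched in commutative monoids with a zero object,
finite †-biproducts and †-equalizers of all finite families of parallel
morphisms, n-fold sums of morphisms are cancellable. -/
theorem stmt6 {C : Type u} [Category.{v} C]
    [∀ X Y : C, AddCommMonoid (X ⟶ Y)] [HasZeroObject C]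
    (D : DaggerData C) (En : CMonEnriched C)
    (hbp : HasFiniteDagBiproducts D) (heq : HasFiniteDagEqualizers D)
    {A B : C} (f g : A ⟶ B) (n : ℕ) (hn : n ≠ 0) (hfg : n • f = n • g) :
    f = g := by
  obtain ⟨m, rfl⟩ := Nat.exists_eq_succ_of_ne_zero hn
  obtain ⟨P, i, h1, h0, hsum⟩ := hbp (m + 1) (fun _ => A)
  obtain ⟨E, e, he, hee, huniv⟩ := heq (m + 1) (fun k => D.dag (i k))
  obtain ⟨Δ, hΔ⟩ : ∃ Δ : A ⟶ P, Δ = ∑ k, i k := ⟨_, rfl⟩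
  have hΔu : ∀ k, Δ ≫ D.dag (i k) = 𝟙 A := fun k => by
    rw [hΔ, En.sum_comp, Finset.sum_eq_single k (fun j _ hj => h0 j k hj) (by simp), h1]
  obtain ⟨t, ht, -⟩ := huniv Δ (fun k j => by rw [hΔu, hΔu])
  -- The inverse of `t` is the common composite of `e` with the projections.
  obtain ⟨s, hs⟩ : ∃ s : E ⟶ A, s = e ≫ D.dag (i 0) := ⟨_, rfl⟩
  have hts : t ≫ s = 𝟙 A := by rw [hs, ← Category.assoc, ht, hΔu]
  have hsΔ : s ≫ Δ = e := by
    calc s ≫ Δ = ∑ k, s ≫ i k := by rw [hΔ, En.comp_sum]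
      _ = ∑ k, e ≫ D.dag (i k) ≫ i k :=
        Finset.sum_congr rfl fun k _ => by rw [hs, he 0 k, Category.assoc]
      _ = e := by rw [← En.comp_sum, hsum, Category.comp_id]
  have hst : s ≫ t = 𝟙 E := by
    calc s ≫ t = s ≫ t ≫ e ≫ D.dag e := by rw [hee, Category.comp_id]
      _ = (s ≫ t ≫ e) ≫ D.dag e := by simp only [Category.assoc]
      _ = 𝟙 E := by rw [ht, hsΔ, hee]
  -- Inserting `∑ k, (i k)† ≫ i k = 𝟙 P` avoids having to show that the dagger is additive.
  have hΔΔ : Δ ≫ D.dag Δ = (m + 1) • 𝟙 A := by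
    calc Δ ≫ D.dag Δ = Δ ≫ (∑ k, D.dag (i k) ≫ i k) ≫ D.dag Δ := by
          rw [hsum, Category.id_comp]
      _ = ∑ k, (Δ ≫ D.dag (i k)) ≫ D.dag (Δ ≫ D.dag (i k)) := by
          rw [En.sum_comp, En.comp_sum]
          simp only [D.dag_comp, D.dag_dag, Category.assoc]
      _ = (m + 1) • 𝟙 A := by simp [hΔu, D.dag_id]
  have htt : t ≫ D.dag t = (m + 1) • 𝟙 A := by
    rw [← hΔΔ, ← ht, D.dag_comp, Category.assoc, ← Category.assoc e, hee, Category.id_comp]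
  have key : ∀ h : A ⟶ B, D.dag s ≫ s ≫ ((m + 1) • h) = h := fun h => by
    have hmul : (m + 1) • h = t ≫ D.dag t ≫ h := by
      rw [← Category.assoc, htt]
      have := En.sum_comp Finset.univ (fun _ : Fin (m + 1) => 𝟙 A) h
      simpa using this.symm
    rw [hmul, ← Category.assoc s, hst, Category.id_comp, ← Category.assoc, ← D.dag_comp, hts,
      D.dag_id, Category.id_comp]
  rw [← key f, ← key g]
  exact congrArg (fun x => D.dag s ≫ s ≫ x) hfg
end

section
/- In a †-category enriched in commutative monoids that has a zero object, finite †-biproducts and †-equalizers of all finite families of parallel morphisms, every identity morphism can be divided by any nonzero natural number: for each object A and each natural number n ≥ 1, there exists a unique morphism x : A ⟶ A with n • x = 𝟙 A, where n • x denotes the n-fold sum x + ⋯ + x. -/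
/-!
Let `P` be the `n`-fold †-biproduct of `A`, with diagonal `d : A ⟶ P`, and let `e : E ⟶ P` be the
†-equalizer of the `n` projections. Since the diagonal is also an equalizer of the projections,
`e = q ≫ d` for an isomorphism `q : E ⟶ A` with inverse `t`. As `d ≫ d† = n • 𝟙 A`, the equation
`e ≫ e† = 𝟙 E` reads `n • (q ≫ q†) = 𝟙 E`; conjugating by `q` gives `n • (q† ≫ q) = 𝟙 A`.
Uniqueness is the uniqueness of inverses: `x = x ≫ (n • y) = (n • x) ≫ y = y`.
-/

open CategoryTheory CategoryTheory.Limits CategoryTheory.MonoidalCategory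

universe v u

namespace CMonEnriched

variable {C : Type u} [Category.{v} C] [∀ X Y : C, AddCommMonoid (X ⟶ Y)]

lemma comp_sum_s7 (En : CMonEnriched C) {ι : Type*} (s : Finset ι) {X Y Z : C} (f : X ⟶ Y)
    (g : ι → (Y ⟶ Z)) : f ≫ (∑ k ∈ s, g k) = ∑ k ∈ s, f ≫ g k :=
  map_sum ({ toFun := fun h : Y ⟶ Z => f ≫ h, map_zero' := En.comp_zero f,
             map_add' := En.comp_add f : (Y ⟶ Z) →+ (X ⟶ Z) }) g s

lemma sum_comp_s7 (En : CMonEnriched C) {ι : Type*} (s : Finset ι) {X Y Z : C} (g : ι → (X ⟶ Y))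
    (f : Y ⟶ Z) : (∑ k ∈ s, g k) ≫ f = ∑ k ∈ s, g k ≫ f :=
  map_sum ({ toFun := fun h : X ⟶ Y => h ≫ f, map_zero' := En.zero_comp f,
             map_add' := fun a b => En.add_comp a b f : (X ⟶ Y) →+ (X ⟶ Z) }) g s

lemma comp_nsmul (En : CMonEnriched C) (n : ℕ) {X Y Z : C} (f : X ⟶ Y) (g : Y ⟶ Z) :
    f ≫ (n • g) = n • (f ≫ g) := by
  simpa using En.comp_sum_s7 (Finset.univ : Finset (Fin n)) f (fun _ => g)

lemma nsmul_comp (En : CMonEnriched C) (n : ℕ) {X Y Z : C} (g : X ⟶ Y) (f : Y ⟶ Z) :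
    (n • g) ≫ f = n • (g ≫ f) := by
  simpa using En.sum_comp_s7 (Finset.univ : Finset (Fin n)) (fun _ => g) f

end CMonEnriched

/-- In a †-category enriched in commutative monoids with a zero object,
finite †-biproducts and †-equalizers of all finite families of parallel
morphisms, every identity morphism can be divided by any nonzero natural
number: there is a unique `x` with `n • x = 𝟙 A`. -/
theorem stmt7 {C : Type u} [Category.{v} C]
    [∀ X Y : C, AddCommMonoid (X ⟶ Y)] [HasZeroObject C]
    (D : DaggerData C) (En : CMonEnriched C)
    (hbp : HasFiniteDagBiproducts D) (heq : HasFiniteDagEqualizers D)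
    (A : C) (n : ℕ) (hn : 1 ≤ n) :
    ∃! x : A ⟶ A, n • x = 𝟙 A := by
  obtain ⟨P, i, h1, h0, hs⟩ := hbp n (fun _ => A)
  obtain ⟨E, e, he, hee, huniv⟩ := heq n (fun k => D.dag (i k))
  let k₀ : Fin n := ⟨0, hn⟩
  let d : A ⟶ P := ∑ k, i k
  let q : E ⟶ A := e ≫ D.dag (i k₀)
  have hd : ∀ k, d ≫ D.dag (i k) = 𝟙 A := fun k => by
    change (∑ j, i j) ≫ _ = _
    rw [En.sum_comp_s7, Finset.sum_eq_single k (fun j _ hj => h0 j k hj) (by simp), h1]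
  -- Obtained by applying the dagger to `hd`, so additivity of the dagger is not required.
  have hd' : ∀ k, i k ≫ D.dag d = 𝟙 A := fun k => by
    rw [← D.dag_dag (i k), ← D.dag_comp, hd, D.dag_id]
  have hdd : d ≫ D.dag d = n • 𝟙 A := by
    change (∑ j, i j) ≫ _ = _
    rw [En.sum_comp_s7]
    simp [hd']
  have heq' : e = q ≫ d := by
    calc e = e ≫ ∑ k, D.dag (i k) ≫ i k := by rw [hs, Category.comp_id]
      _ = ∑ k, q ≫ i k := by
        rw [En.comp_sum_s7]
        refine Finset.sum_congr rfl fun k _ => ?_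
        rw [← Category.assoc, he k k₀]
      _ = q ≫ d := (En.comp_sum_s7 _ _ _).symm
  obtain ⟨t, ht, -⟩ := huniv d (fun k j => by rw [hd, hd])
  have htq : t ≫ q = 𝟙 A := by
    change t ≫ e ≫ _ = _
    rw [← Category.assoc, ht, hd]
  have hqq : n • (q ≫ D.dag q) = 𝟙 E := by
    calc n • (q ≫ D.dag q) = q ≫ (d ≫ D.dag d) ≫ D.dag q := by
          rw [hdd, En.nsmul_comp, En.comp_nsmul, Category.id_comp]
      _ = (q ≫ d) ≫ D.dag (q ≫ d) := by simp only [D.dag_comp, Category.assoc]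
      _ = 𝟙 E := by rw [← heq', hee]
  have hx : n • (D.dag q ≫ q) = 𝟙 A := by
    calc n • (D.dag q ≫ q) = n • ((t ≫ q) ≫ D.dag q ≫ q) := by rw [htq, Category.id_comp]
      _ = t ≫ (n • (q ≫ D.dag q)) ≫ q := by
        rw [En.nsmul_comp, En.comp_nsmul]; simp only [Category.assoc]
      _ = 𝟙 A := by rw [hqq, Category.id_comp, htq]
  refine ⟨D.dag q ≫ q, hx, fun y hy => ?_⟩
  calc y = y ≫ (n • (D.dag q ≫ q)) := by rw [hx, Category.comp_id]
    _ = (n • y) ≫ D.dag q ≫ q := by rw [En.comp_nsmul, En.nsmul_comp]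
    _ = D.dag q ≫ q := by rw [hy, Category.id_comp]
end

section
/- (Exchange lemma.) In a †-category enriched in commutative monoids that has a zero object, binary †-biproducts and †-equalizers of all parallel pairs, for any parallel morphisms f, g : A ⟶ B: if f† ≫ f + g† ≫ g = f† ≫ g + g† ≫ f (as morphisms B ⟶ B, with the first factor applied first), then f = g. -/
/-!
Call `w = (f†, g†)` and `w' = (g†, f†)` the two morphisms `B ⟶ A ⊕ A` built from `f` and `g`.
The hypothesis says exactly that both `w` and `w'` equalize the pair `w†, w'†`.
Let `e` be the †-equalizer of that pair and write `w = t ≫ e`, `w' = t' ≫ e`. As `e` is an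
isometry, `t† = e ≫ w† = e ≫ w'† = t'†`, so `w = w'`, and the first components agree: `f† = g†`.
The dagger is not assumed additive; the identities `i₁ ≫ w† = f`, `i₂ ≫ w† = g` used to compute
with `w†` come from taking daggers of `w ≫ i₁† = f†`, `w ≫ i₂† = g†`.
-/

open CategoryTheory CategoryTheory.Limits CategoryTheory.MonoidalCategory

universe v u

/-- Two morphisms that both equalize their own daggers are equal, by factoring them through the
†-equalizer of the daggers. -/
theorem eq_of_equalize_daggers {C : Type u} [Category.{v} C] (D : DaggerData C)
    (heq : HasDagEqualizers D) {X Y : C} (w w' : X ⟶ Y)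
    (h : w ≫ D.dag w = w ≫ D.dag w') (h' : w' ≫ D.dag w = w' ≫ D.dag w') : w = w' := by
  obtain ⟨E, e, he, hee, hu⟩ := heq (D.dag w) (D.dag w')
  obtain ⟨t, ht, -⟩ := hu w h
  obtain ⟨t', ht', -⟩ := hu w' h'
  have key : D.dag t = D.dag t' := by
    simpa only [← ht, ← ht', D.dag_comp, ← Category.assoc, hee, Category.id_comp] using he
  rw [← ht, ← ht', ← D.dag_dag t, key, D.dag_dag]

/-- Exchange lemma: in a †-category enriched in commutative monoids with a zero
object, binary †-biproducts and †-equalizers of all parallel pairs,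
`f† ≫ f + g† ≫ g = f† ≫ g + g† ≫ f` implies `f = g`. -/
theorem stmt8 {C : Type u} [Category.{v} C]
    [∀ X Y : C, AddCommMonoid (X ⟶ Y)] [HasZeroObject C]
    (D : DaggerData C) (En : CMonEnriched C)
    (hbp : HasBinaryDagBiproducts D) (heq : HasDagEqualizers D)
    {A B : C} (f g : A ⟶ B)
    (h : D.dag f ≫ f + D.dag g ≫ g = D.dag f ≫ g + D.dag g ≫ f) :
    f = g := by
  obtain ⟨P, i, j, hii, hjj, hij, hji, -⟩ := hbp A A
  have fst (x y : B ⟶ A) : (x ≫ i + y ≫ j) ≫ D.dag i = x := by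
    rw [En.add_comp, Category.assoc, Category.assoc, hii, hji, En.comp_zero, Category.comp_id,
      add_zero]
  have snd (x y : B ⟶ A) : (x ≫ i + y ≫ j) ≫ D.dag j = y := by
    rw [En.add_comp, Category.assoc, Category.assoc, hij, hjj, En.comp_zero, Category.comp_id,
      zero_add]
  have dag_fst (x y : B ⟶ A) : i ≫ D.dag (x ≫ i + y ≫ j) = D.dag x := by
    simpa only [D.dag_comp, D.dag_dag] using congrArg D.dag (fst x y)
  have dag_snd (x y : B ⟶ A) : j ≫ D.dag (x ≫ i + y ≫ j) = D.dag y := by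
    simpa only [D.dag_comp, D.dag_dag] using congrArg D.dag (snd x y)
  have inner (x y x' y' : B ⟶ A) : (x ≫ i + y ≫ j) ≫ D.dag (x' ≫ i + y' ≫ j) =
      x ≫ D.dag x' + y ≫ D.dag y' := by
    rw [En.add_comp, Category.assoc, Category.assoc, dag_fst, dag_snd]
  have hw : D.dag f ≫ i + D.dag g ≫ j = D.dag g ≫ i + D.dag f ≫ j := by
    apply eq_of_equalize_daggers D heq
    · rw [inner, inner, D.dag_dag, D.dag_dag, h]
    · rw [inner, inner, D.dag_dag, D.dag_dag, add_comm, ← h, add_comm]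
  have hd : D.dag f = D.dag g := by
    rw [← fst (D.dag f) (D.dag g), hw, fst]
  rw [← D.dag_dag f, hd, D.dag_dag]
end

section
/- If a †-category enriched in commutative monoids has a zero object, binary †-equalizers and binary †-biproducts, then it has †-equalizers of all nonempty finite families of parallel morphisms: for every finite nonempty family f_i : A ⟶ B (i ∈ I), there exists a morphism e : E ⟶ A with e ≫ e† = 𝟙 E, e ≫ f_i = e ≫ f_j for all i, j ∈ I, and such that every x : X ⟶ A with x ≫ f_i = x ≫ f_j for all i, j factors uniquely through e. -/
/-!
Joint equalizers are built by iterating binary ones. Fix an index `i₀`. If `e` is a †-equalizer of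
`f i` with `f i₀` for all `i` in a finite set `s`, and `k` is a †-equalizer of `e ≫ f a` and
`e ≫ f i₀`, then `k ≫ e` is one for `insert a s`: isometries compose, and a morphism factors through
`k ≫ e` as soon as it factors through `e` and the factor equalizes the new pair. Factorizations
through an isometry are unique because it is a split monomorphism.
-/

open CategoryTheory CategoryTheory.Limits CategoryTheory.MonoidalCategory

universe v u

/-- Iterated †-equalizers: the weak universal property suffices here, since an isometry is monic. -/
theorem exists_isometry_equalizing_finset {C : Type u} [Category.{v} C]
    (D : DaggerData C) (heq : HasDagEqualizers D)
    {I : Type} {A B : C} (f : I → (A ⟶ B)) (i₀ : I) (s : Finset I) :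
    ∃ (E : C) (e : E ⟶ A),
      e ≫ D.dag e = 𝟙 E ∧ (∀ i ∈ s, e ≫ f i = e ≫ f i₀) ∧
      ∀ {X : C} (x : X ⟶ A), (∀ i ∈ s, x ≫ f i = x ≫ f i₀) →
        ∃ t : X ⟶ E, t ≫ e = x := by
  classical
  induction s using Finset.induction_on with
  | empty =>
    exact ⟨A, 𝟙 A, by rw [D.dag_id, Category.comp_id], by simp,
      fun x _ => ⟨x, Category.comp_id x⟩⟩
  | insert a s _ ih =>
    obtain ⟨E, e, he, hs, hfac⟩ := ih
    obtain ⟨K, k, hk, hkk, hkfac⟩ := heq (e ≫ f a) (e ≫ f i₀)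
    refine ⟨K, k ≫ e, ?_, ?_, ?_⟩
    · rw [D.dag_comp, Category.assoc, reassoc_of% he, hkk]
    · intro i hi
      rcases Finset.mem_insert.mp hi with rfl | hi
      · simpa only [Category.assoc] using hk
      · simp only [Category.assoc, hs i hi]
    · intro X x hx
      obtain ⟨t, rfl⟩ := hfac x fun i hi => hx i (Finset.mem_insert_of_mem hi)
      obtain ⟨r, hr, -⟩ := hkfac t
        (by simpa only [Category.assoc] using hx a (Finset.mem_insert_self a s))
      exact ⟨r, by rw [← Category.assoc, hr]⟩

/-- From binary †-equalizers and binary †-biproducts (with a zero object),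
†-equalizers of all nonempty finite families of parallel morphisms exist. -/
theorem stmt9 {C : Type u} [Category.{v} C]
    [∀ X Y : C, AddCommMonoid (X ⟶ Y)] [HasZeroObject C]
    (D : DaggerData C) (En : CMonEnriched C)
    (heq : HasDagEqualizers D) (hbp : HasBinaryDagBiproducts D)
    {I : Type} [Fintype I] [Nonempty I] {A B : C} (f : I → (A ⟶ B)) :
    ∃ (E : C) (e : E ⟶ A),
      e ≫ D.dag e = 𝟙 E ∧ (∀ i j : I, e ≫ f i = e ≫ f j) ∧
      ∀ {X : C} (x : X ⟶ A), (∀ i j : I, x ≫ f i = x ≫ f j) →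
        ∃! t : X ⟶ E, t ≫ e = x := by
  obtain ⟨i₀⟩ := ‹Nonempty I›
  obtain ⟨E, e, he, hs, hfac⟩ :=
    exists_isometry_equalizing_finset D heq f i₀ Finset.univ
  refine ⟨E, e, he, fun i j => ?_, fun x hx => ?_⟩
  · rw [hs i (Finset.mem_univ i), hs j (Finset.mem_univ j)]
  · obtain ⟨t, ht⟩ := hfac x fun i _ => hx i i₀
    refine ⟨t, ht, fun r hr => ?_⟩
    -- Postcomposing with the retraction `D.dag e` recovers a factor from its composite with `e`.
    have key := congrArg (· ≫ D.dag e) (hr.trans ht.symm)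
    simpa only [Category.assoc, he, Category.comp_id] using key
end

section
/- In a unitary †-category enriched in commutative monoids with a zero object, binary †-equalizers and binary †-biproducts, square roots of positive natural numbers exist on every object: for each object A and each natural number n ≥ 1, there is an isomorphism r : A ⟶ A with r ≫ r† = n • 𝟙 A (the n-fold sum of the identity). -/
/-!
The diagonal `Δ : A ⟶ A ⊕ ⋯ ⊕ A` into an `n`-fold †-biproduct satisfies `Δ ≫ Δ† = n • 𝟙 A` and is
split by a projection `s` (`exists_split_norm`). A split mono is an equalizer of `s ≫ Δ` and the
identity, so the †-equalizer `e : E ⟶ A ⊕ ⋯ ⊕ A` of that pair yields an isomorphism `t : A ⟶ E`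
with `t ≫ e = Δ`, and `t ≫ t† = Δ ≫ Δ†` because `e` is an isometry. Composing `t` with a unitary
`E ⟶ A`, which exists since `A ≅ E`, gives the square root (`exists_iso_of_split`).
-/

open CategoryTheory CategoryTheory.Limits CategoryTheory.MonoidalCategory

universe v u

/-- A †-category is unitary if every pair of isomorphic objects has a unitary
isomorphism between them. -/
def IsUnitaryCat {C : Type u} [Category.{v} C] (D : DaggerData C) : Prop :=
  ∀ {A B : C}, (A ≅ B) → ∃ u : A ⟶ B, u ≫ D.dag u = 𝟙 A ∧ D.dag u ≫ u = 𝟙 B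

/-- The diagonal `d` of an `(m + 1)`-fold †-biproduct, remembered only through its retraction and the
value of `d ≫ d†`. -/
theorem exists_split_norm {C : Type u} [Category.{v} C]
    [∀ X Y : C, AddCommMonoid (X ⟶ Y)]
    (D : DaggerData C) (En : CMonEnriched C) (hbp : HasBinaryDagBiproducts D)
    (A : C) (m : ℕ) :
    ∃ (P : C) (d : A ⟶ P) (s : P ⟶ A), d ≫ s = 𝟙 A ∧ d ≫ D.dag d = (m + 1) • 𝟙 A := by
  induction m with
  | zero => exact ⟨A, 𝟙 A, 𝟙 A, by simp, by simp [D.dag_id]⟩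
  | succ m ih =>
    obtain ⟨P, d, s, hs, hd⟩ := ih
    obtain ⟨Q, i, j, hi, hj, hij, hji, -⟩ := hbp P A
    have h1 : (d ≫ i + j) ≫ D.dag i = d := by
      rw [En.add_comp, Category.assoc, hi, hji, Category.comp_id, add_zero]
    have h2 : (d ≫ i + j) ≫ D.dag j = 𝟙 A := by
      rw [En.add_comp, Category.assoc, hij, hj, En.comp_zero, zero_add]
    -- Daggering the two component equations avoids any appeal to additivity of the dagger.
    have h3 : i ≫ D.dag (d ≫ i + j) = D.dag d := by
      rw [← h1, D.dag_comp, D.dag_dag, h1]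
    have h4 : j ≫ D.dag (d ≫ i + j) = 𝟙 A := by
      rw [← D.dag_id A, ← h2, D.dag_comp, D.dag_dag]
    refine ⟨Q, d ≫ i + j, D.dag i ≫ s, ?_, ?_⟩
    · rw [← Category.assoc, h1, hs]
    · rw [En.add_comp, Category.assoc, h3, h4, hd, ← succ_nsmul]

/-- For a split mono `d` out of `A`, the positive endomorphism `d ≫ d†` has an invertible
square root. -/
theorem exists_iso_of_split {C : Type u} [Category.{v} C]
    (D : DaggerData C) (hu : IsUnitaryCat D) (heq : HasDagEqualizers D)
    {A P : C} (d : A ⟶ P) (s : P ⟶ A) (hs : d ≫ s = 𝟙 A) :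
    ∃ r : A ⟶ A, IsIso r ∧ r ≫ D.dag r = d ≫ D.dag d := by
  obtain ⟨E, e, he, hiso, huniv⟩ := heq (s ≫ d) (𝟙 P)
  obtain ⟨t, ht, -⟩ := huniv d (by rw [← Category.assoc, hs, Category.id_comp, Category.comp_id])
  have hinv : (e ≫ s) ≫ t = 𝟙 E := by
    calc (e ≫ s) ≫ t = (e ≫ s) ≫ t ≫ e ≫ D.dag e := by rw [hiso, Category.comp_id]
      _ = (e ≫ s ≫ d) ≫ D.dag e := by rw [← ht]; simp only [Category.assoc]
      _ = 𝟙 E := by rw [he, Category.comp_id, hiso]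
  let φ : A ≅ E := ⟨t, e ≫ s, by rw [← Category.assoc, ht, hs], hinv⟩
  obtain ⟨w, hw1, hw2⟩ := hu φ.symm
  have : IsIso t := φ.isIso_hom
  have : IsIso w := ⟨D.dag w, hw1, hw2⟩
  refine ⟨t ≫ w, inferInstance, ?_⟩
  calc (t ≫ w) ≫ D.dag (t ≫ w) = t ≫ (w ≫ D.dag w) ≫ D.dag t := by
        rw [D.dag_comp]; simp only [Category.assoc]
    _ = t ≫ (e ≫ D.dag e) ≫ D.dag t := by rw [hw1, hiso]
    _ = d ≫ D.dag d := by rw [← ht, D.dag_comp]; simp only [Category.assoc]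

/-- In a unitary †-category enriched in commutative monoids with a zero object,
binary †-equalizers and binary †-biproducts, square roots of positive natural
numbers exist on every object: there is an isomorphism `r` with `r ≫ r† = n • 𝟙 A`. -/
theorem stmt10 {C : Type u} [Category.{v} C]
    [∀ X Y : C, AddCommMonoid (X ⟶ Y)] [HasZeroObject C]
    (D : DaggerData C) (En : CMonEnriched C) (hu : IsUnitaryCat D)
    (heq : HasDagEqualizers D) (hbp : HasBinaryDagBiproducts D)
    (A : C) (n : ℕ) (hn : 1 ≤ n) :
    ∃ r : A ⟶ A, IsIso r ∧ r ≫ D.dag r = n • 𝟙 A := by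
  obtain ⟨m, rfl⟩ : ∃ m, n = m + 1 := ⟨n - 1, by omega⟩
  obtain ⟨P, d, s, hs, hd⟩ := exists_split_norm D En hbp A m
  obtain ⟨r, hr, h⟩ := exists_iso_of_split D hu heq d s hs
  exact ⟨r, hr, h.trans hd⟩
end

section
/- Let C and D be †-categories and let F : C ⥤ D be a functor that is full, faithful, commutes with the †-operations (F(f†) = (F f)† for all morphisms f), and is unitarily essentially surjective (for every object d of D there exist an object c of C and an isomorphism u : d ≅ F c whose underlying morphism is unitary). Then F is part of a unitary †-equivalence: there exist a functor G : D ⥤ C with G(f†) = (G f)† for all f, and natural isomorphisms F ⋙ G ≅ 𝟭_C and G ⋙ F ≅ 𝟭_D all of whose components are unitary. -/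
/-!
Choose for every `d : D` an object `c d` and a unitary `u d : d ⟶ F.obj (c d)`. Transporting
`f : X ⟶ Y` along these unitaries gives `(u X)† ≫ f ≫ u Y`, and `G.map f` is its unique
preimage under the fully faithful `F`. Since the inverse of `u X` is its dagger, `(G.map f)†` and
`G.map f†` have the same image under `F`, so `G` preserves daggers. The isomorphism
`G ⋙ F ≅ 𝟭 D` has components `(u d)†`, and `F ⋙ G ≅ 𝟭 C` has as components the preimages of
`(u (F.obj a))†`; these are unitary because `F` is faithful and preserves daggers.
-/

open CategoryTheory CategoryTheory.Limits CategoryTheory.MonoidalCategory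

universe v u

/-- A full, faithful, unitarily essentially surjective functor that commutes with
the †-operations is part of a unitary †-equivalence. -/
theorem stmt12 {C : Type u} [Category.{v} C] {D : Type*} [Category D]
    (dC : DaggerData C) (dD : DaggerData D)
    (F : C ⥤ D) [F.Full] [F.Faithful]
    (hdag : ∀ {A B : C} (f : A ⟶ B), F.map (dC.dag f) = dD.dag (F.map f))
    (hsurj : ∀ d : D, ∃ (c : C) (u : d ⟶ F.obj c),
      u ≫ dD.dag u = 𝟙 d ∧ dD.dag u ≫ u = 𝟙 (F.obj c)) :
    ∃ G : D ⥤ C,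
      (∀ {X Y : D} (f : X ⟶ Y), G.map (dD.dag f) = dC.dag (G.map f)) ∧
      ∃ (η : F ⋙ G ≅ 𝟭 C) (ε : G ⋙ F ≅ 𝟭 D),
        (∀ c : C, η.hom.app c ≫ dC.dag (η.hom.app c) = 𝟙 ((F ⋙ G).obj c) ∧
          dC.dag (η.hom.app c) ≫ η.hom.app c = 𝟙 c) ∧
        (∀ d : D, ε.hom.app d ≫ dD.dag (ε.hom.app d) = 𝟙 ((G ⋙ F).obj d) ∧
          dD.dag (ε.hom.app d) ≫ ε.hom.app d = 𝟙 d) := by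
  choose c u hu hu' using hsurj
  have dag_nat : ∀ {X Y : D} (f : X ⟶ Y),
      (dD.dag (u X) ≫ f ≫ u Y) ≫ dD.dag (u Y) = dD.dag (u X) ≫ f := by
    intro X Y f
    rw [Category.assoc, Category.assoc, hu, Category.comp_id]
  let G : D ⥤ C :=
    { obj := c
      map := fun {X Y} f => F.preimage (dD.dag (u X) ≫ f ≫ u Y)
      map_id := fun X => F.map_injective (by simp [hu'])
      map_comp := fun {X Y Z} f g => F.map_injective (by
        simp only [F.map_preimage, F.map_comp, Category.assoc]
        rw [← Category.assoc (u Y) (dD.dag (u Y)), hu, Category.id_comp]) }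
  have hG : ∀ {X Y : D} (f : X ⟶ Y), F.map (G.map f) = dD.dag (u X) ≫ f ≫ u Y :=
    fun f => F.map_preimage _
  let ε : G ⋙ F ≅ 𝟭 D := NatIso.ofComponents
    (fun d => (⟨dD.dag (u d), u d, hu' d, hu d⟩ : F.obj (c d) ≅ d))
    (fun {X Y} f => by
      change F.map (G.map f) ≫ dD.dag (u Y) = dD.dag (u X) ≫ f
      rw [hG, dag_nat])
  -- The counit on `F.obj a` lifts along the fully faithful `F` to the component at `a`.
  let η : F ⋙ G ≅ 𝟭 C := NatIso.ofComponents
    (fun a => (F.preimageIso ⟨dD.dag (u (F.obj a)), u (F.obj a), hu' _, hu _⟩ :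
      c (F.obj a) ≅ a))
    (fun {a b} f => F.map_injective (by
      change F.map (G.map (F.map f) ≫ F.preimage (dD.dag (u (F.obj b)))) =
        F.map (F.preimage (dD.dag (u (F.obj a))) ≫ f)
      rw [F.map_comp, F.map_comp, hG, F.map_preimage, F.map_preimage, dag_nat]))
  have hη : ∀ a, F.map (η.hom.app a) = dD.dag (u (F.obj a)) := fun a => F.map_preimage _
  refine ⟨G, ?_, η, ε, fun a => ⟨F.map_injective ?_, F.map_injective ?_⟩, fun d => ⟨?_, ?_⟩⟩
  · intro X Y f
    apply F.map_injective
    rw [hdag, hG, hG, dD.dag_comp, dD.dag_comp, dD.dag_dag, Category.assoc]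
  · rw [F.map_comp, hdag, hη, dD.dag_dag]
    exact (hu' _).trans (F.map_id _).symm
  · rw [F.map_comp, hdag, hη, dD.dag_dag]
    exact (hu _).trans (F.map_id a).symm
  · change dD.dag (u d) ≫ dD.dag (dD.dag (u d)) = _
    rw [dD.dag_dag]
    exact hu' d
  · change dD.dag (dD.dag (u d)) ≫ dD.dag (u d) = _
    rw [dD.dag_dag]
    exact hu d
end

section
/- In a monoidal †-category with a zero object, †-equalizers of all parallel pairs, and a simple tensor unit, the scalars have cancellable multiplication: for all scalars a, b, c : I ⟶ I, if a ≫ c = b ≫ c and c ≠ 0, then a = b. -/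
/-! Scalars commute, so `a ≫ c = b ≫ c` gives `c ≫ a = c ≫ b`, and `c` factors through the
equalizer `e` of `a` and `b`. As `e` is a monomorphism into the simple unit, it is zero or
invertible; it is not zero since `c ≠ 0`, so it is invertible and `a = b`. -/

open CategoryTheory CategoryTheory.Limits CategoryTheory.MonoidalCategory

universe v u

/-- Eckmann–Hilton for scalars: under `λ_ (𝟙_ C) = ρ_ (𝟙_ C)` one scalar acts on the left
factor of `𝟙_ C ⊗ 𝟙_ C` and the other on the right, and such actions commute. -/
theorem scalars_comm {C : Type u} [Category.{v} C] [MonoidalCategory C]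
    (a b : 𝟙_ C ⟶ 𝟙_ C) : a ≫ b = b ≫ a := by
  have hl (f : 𝟙_ C ⟶ 𝟙_ C) : 𝟙_ C ◁ f ≫ (λ_ (𝟙_ C)).hom = (λ_ (𝟙_ C)).hom ≫ f :=
    leftUnitor_naturality f
  have hr (f : 𝟙_ C ⟶ 𝟙_ C) : f ▷ 𝟙_ C ≫ (λ_ (𝟙_ C)).hom = (λ_ (𝟙_ C)).hom ≫ f := by
    rw [unitors_equal]; exact rightUnitor_naturality f
  rw [← cancel_epi (λ_ (𝟙_ C)).hom, ← Category.assoc, ← Category.assoc, ← hl a, ← hr b,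
    Category.assoc, Category.assoc, ← hr b, ← hl a, ← Category.assoc, ← Category.assoc,
    whisker_exchange]

/-- In a monoidal †-category with a zero object, †-equalizers of all parallel
pairs and a simple tensor unit, the scalars have cancellable multiplication. -/
theorem stmt13 {C : Type u} [Category.{v} C] [MonoidalCategory C]
    [HasZeroMorphisms C] [HasZeroObject C]
    (D : DaggerData C)
    (heq : HasDagEqualizers D)
    (hsimple : ∀ {X : C} (m : X ⟶ 𝟙_ C), Mono m → m = 0 ∨ IsIso m)
    (a b c : 𝟙_ C ⟶ 𝟙_ C) (h : a ≫ c = b ≫ c) (hc : c ≠ 0) :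
    a = b := by
  obtain ⟨E, e, he, -, huniv⟩ := heq a b
  obtain ⟨t, ht, -⟩ := huniv c (by rw [← scalars_comm a c, h, scalars_comm b c])
  have hmono : Mono e := ⟨fun {W} p q hpq => by
    obtain ⟨r, -, hr⟩ := huniv (p ≫ e) (by simp only [Category.assoc, he])
    rw [hr p rfl, hr q hpq.symm]⟩
  rcases hsimple e hmono with h0 | hiso
  · exact absurd (by rw [← ht, h0, comp_zero]) hc
  · exact (cancel_epi e).1 he
end
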